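/- Along every realization of positive probability, the conditional distribution of agent 2's new state given the past and the next new information satisfies the Bayes-filter formula: P^{(g,ψ^2)}(S_t^2 = s_t^2 | π_t^2, m_t^2, z_{t+1}^2, γ_{0:t}^{[2,1]}) = [ P^{(g,ψ^2)}(Z_{t+1}^2 = z_{t+1}^2 | s_t^2, π_t^2, m_t^2, γ_{0:t}^{[2,1]}) · π_t^2(s_t^2) ] / [ Σ_{s̃_t^2} P^{(g,ψ^2)}(Z_{t+1}^2 = z_{t+1}^2 | s̃_t^2, π_t^2, m_t^2, γ_{0:t}^{[2,1]}) · π_t^2(s̃_t^2) ], and moreover the observation likelihood is strategy-independent: P^{(g,ψ^2)}(Z_{t+1}^2 = z_{t+1}^2 | s_t^2, π_t^2, m_t^2, γ_{0:t}^{[2,1]}) = Σ_{w_t, v_{t+1}^1, v_{t+1}^2} 𝕀[ φ̂_t(s_t^2, π_t^2, γ_t^{[2,1]}, u_t^2, w_t, v_{t+1}^{1:2}) = z_{t+1}^2 ] · P(W_t = w_t) · P(V_{t+1}^{1:2} = v_{t+1}^{1:2}). -/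

import Mathlib

/-!
Common framework: a two-agent sequential dynamic team with nested information
structure (Dave & Malikopoulos, "Structural results for decentralized
stochastic control with a nested information structure").

* `X t` : state space at time `t`; `U1 t`, `U2 t` : action spaces of agents 1 and 2;
* `W t` : disturbance; `V1 t`, `V2 t` : measurement noises; `Y1 t`, `Y2 t` : observations.
* Dynamics `X_{t+1} = f t X_t U¹_t U²_t W_t`, observations `Y^k_t = h^k t X_t V^k_t`.
* Memories `M²_t = (Y²_{0:t}, U²_{0:t-1})`, `L_t^{[1,2]} = (Y¹_{0:t}, U¹_{0:t-1})`,
  `M¹_t = (L_t^{[1,2]}, M²_t)` (nested information).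
* The primitive random variables are independent with given PMFs; the sample
  space for horizon `T` is `ΩT`, with the product mass function `mass`.
-/

open scoped Classical
open Finset

namespace NestedTeam

noncomputable section

/-- Memory of agent 2 at time `t`: observations `Y²₀,…,Y²ₜ` and actions `U²₀,…,U²ₜ₋₁`. -/
abbrev M2 (Y2 U2 : ℕ → Type) (t : ℕ) : Type :=
  ((s : Fin (t + 1)) → Y2 s) × ((s : Fin t) → U2 s)

/-- The private information `L_t^{[1,2]} = M¹_t \ M²_t` of agent 1. -/
abbrev Lp (Y1 U1 : ℕ → Type) (t : ℕ) : Type :=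
  ((s : Fin (t + 1)) → Y1 s) × ((s : Fin t) → U1 s)

/-- Memory of agent 1 at time `t` (nested information: it contains `M²_t`). -/
abbrev M1 (Y1 Y2 U1 U2 : ℕ → Type) (t : ℕ) : Type :=
  Lp Y1 U1 t × M2 Y2 U2 t

/-- The system: dynamics, observation maps and per-stage cost. -/
structure Sys (X U1 U2 W V1 V2 Y1 Y2 : ℕ → Type) where
  f : ∀ t, X t → U1 t → U2 t → W t → X (t + 1)
  h1 : ∀ t, X t → V1 t → Y1 t
  h2 : ∀ t, X t → V2 t → Y2 t
  c : ∀ t, X t → U1 t → U2 t → ℝ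

/-- A control strategy profile: `U¹_t = g1 t M¹_t`, `U²_t = g2 t M²_t`. -/
structure Strat (U1 U2 Y1 Y2 : ℕ → Type) where
  g1 : ∀ t, M1 Y1 Y2 U1 U2 t → U1 t
  g2 : ∀ t, M2 Y2 U2 t → U2 t

/-- A realization of the primitive random variables. -/
structure Prim (X W V1 V2 : ℕ → Type) where
  x0 : X 0
  w : ∀ t, W t
  v1 : ∀ t, V1 t
  v2 : ∀ t, V2 t

variable {X U1 U2 W V1 V2 Y1 Y2 : ℕ → Type}

/-- The closed-loop trajectory: states `X_{0:t}` and actions `U^{1:2}_{0:t-1}`. -/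
def hist (S : Sys X U1 U2 W V1 V2 Y1 Y2) (g : Strat U1 U2 Y1 Y2) (ρ : Prim X W V1 V2) :
    (t : ℕ) → ((s : Fin (t + 1)) → X s) × ((s : Fin t) → U1 s × U2 s)
  | 0 => (Fin.cons (α := fun s : Fin 1 => X s) ρ.x0 (fun i => i.elim0), fun i => i.elim0)
  | t + 1 =>
    let p := hist S g ρ t
    let y1 : (s : Fin (t + 1)) → Y1 s := fun s => S.h1 s (p.1 s) (ρ.v1 s)
    let y2 : (s : Fin (t + 1)) → Y2 s := fun s => S.h2 s (p.1 s) (ρ.v2 s)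
    let m1 : M1 Y1 Y2 U1 U2 t := ((y1, fun s => (p.2 s).1), (y2, fun s => (p.2 s).2))
    let a1 := g.g1 t m1
    let a2 := g.g2 t m1.2
    (Fin.snoc (α := fun s : Fin (t + 2) => X s) p.1 (S.f t (p.1 (Fin.last t)) a1 a2 (ρ.w t)),
     Fin.snoc (α := fun s : Fin (t + 1) => U1 s × U2 s) p.2 (a1, a2))

/-- State `X_t` along the closed loop. -/
def xTraj (S : Sys X U1 U2 W V1 V2 Y1 Y2) (g : Strat U1 U2 Y1 Y2) (ρ : Prim X W V1 V2)
    (t : ℕ) : X t := (hist S g ρ t).1 (Fin.last t)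

/-- `L_t^{[1,2]} = (Y¹_{0:t}, U¹_{0:t-1})` along the closed loop. -/
def lpTraj (S : Sys X U1 U2 W V1 V2 Y1 Y2) (g : Strat U1 U2 Y1 Y2) (ρ : Prim X W V1 V2)
    (t : ℕ) : Lp Y1 U1 t :=
  (fun s => S.h1 s ((hist S g ρ t).1 s) (ρ.v1 s), fun s => ((hist S g ρ t).2 s).1)

/-- `M²_t = (Y²_{0:t}, U²_{0:t-1})` along the closed loop. -/
def m2Traj (S : Sys X U1 U2 W V1 V2 Y1 Y2) (g : Strat U1 U2 Y1 Y2) (ρ : Prim X W V1 V2)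
    (t : ℕ) : M2 Y2 U2 t :=
  (fun s => S.h2 s ((hist S g ρ t).1 s) (ρ.v2 s), fun s => ((hist S g ρ t).2 s).2)

/-- `M¹_t` along the closed loop. -/
def m1Traj (S : Sys X U1 U2 W V1 V2 Y1 Y2) (g : Strat U1 U2 Y1 Y2) (ρ : Prim X W V1 V2)
    (t : ℕ) : M1 Y1 Y2 U1 U2 t := (lpTraj S g ρ t, m2Traj S g ρ t)

/-- Action `U¹_t` along the closed loop. -/
def u1Traj (S : Sys X U1 U2 W V1 V2 Y1 Y2) (g : Strat U1 U2 Y1 Y2) (ρ : Prim X W V1 V2)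
    (t : ℕ) : U1 t := g.g1 t (m1Traj S g ρ t)

/-- Action `U²_t` along the closed loop. -/
def u2Traj (S : Sys X U1 U2 W V1 V2 Y1 Y2) (g : Strat U1 U2 Y1 Y2) (ρ : Prim X W V1 V2)
    (t : ℕ) : U2 t := g.g2 t (m2Traj S g ρ t)

/-- Observation `Y¹_t` along the closed loop. -/
def y1Traj (S : Sys X U1 U2 W V1 V2 Y1 Y2) (g : Strat U1 U2 Y1 Y2) (ρ : Prim X W V1 V2)
    (t : ℕ) : Y1 t := S.h1 t (xTraj S g ρ t) (ρ.v1 t)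

/-- Observation `Y²_t` along the closed loop. -/
def y2Traj (S : Sys X U1 U2 W V1 V2 Y1 Y2) (g : Strat U1 U2 Y1 Y2) (ρ : Prim X W V1 V2)
    (t : ℕ) : Y2 t := S.h2 t (xTraj S g ρ t) (ρ.v2 t)

/-- New information `Z¹_{t+1} = (Y¹_{t+1}, U¹_t, Y²_{t+1}, U²_t)` of agent 1. -/
def z1Traj (S : Sys X U1 U2 W V1 V2 Y1 Y2) (g : Strat U1 U2 Y1 Y2) (ρ : Prim X W V1 V2)
    (t : ℕ) : Y1 (t + 1) × U1 t × Y2 (t + 1) × U2 t :=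
  (y1Traj S g ρ (t + 1), u1Traj S g ρ t, y2Traj S g ρ (t + 1), u2Traj S g ρ t)

/-- New information `Z²_{t+1} = (Y²_{t+1}, U²_t)` of agent 2. -/
def z2Traj (S : Sys X U1 U2 W V1 V2 Y1 Y2) (g : Strat U1 U2 Y1 Y2) (ρ : Prim X W V1 V2)
    (t : ℕ) : Y2 (t + 1) × U2 t := (y2Traj S g ρ (t + 1), u2Traj S g ρ t)

/-- Sample space of primitive random variables for horizon `T`. -/
abbrev ΩT (X W V1 V2 : ℕ → Type) (T : ℕ) : Type :=
  X 0 × ((t : Fin (T + 1)) → W t) × ((t : Fin (T + 1)) → V1 t) × ((t : Fin (T + 1)) → V2 t)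

/-- Extend a finite-horizon family to all times (by junk beyond the horizon). -/
def ext {α : ℕ → Type} [∀ t, Inhabited (α t)] (T : ℕ) (a : (t : Fin (T + 1)) → α t)
    (t : ℕ) : α t := if h : t < T + 1 then a ⟨t, h⟩ else default

/-- The primitive realization corresponding to a sample point. -/
def toPrim [∀ t, Inhabited (W t)] [∀ t, Inhabited (V1 t)] [∀ t, Inhabited (V2 t)]
    (T : ℕ) (ω : ΩT X W V1 V2 T) : Prim X W V1 V2 :=
  ⟨ω.1, ext T ω.2.1, ext T ω.2.2.1, ext T ω.2.2.2⟩

/-- The (known) probability mass functions of the mutually independent primitive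
random variables. -/
structure PrimPMF (X W V1 V2 : ℕ → Type) [Fintype (X 0)] [∀ t, Fintype (W t)]
    [∀ t, Fintype (V1 t)] [∀ t, Fintype (V2 t)] where
  pX0 : X 0 → ℝ
  pW : ∀ t, W t → ℝ
  pV1 : ∀ t, V1 t → ℝ
  pV2 : ∀ t, V2 t → ℝ
  pX0_nonneg : ∀ x, 0 ≤ pX0 x
  pX0_sum : ∑ x, pX0 x = 1
  pW_nonneg : ∀ t w, 0 ≤ pW t w
  pW_sum : ∀ t, ∑ w, pW t w = 1
  pV1_nonneg : ∀ t v, 0 ≤ pV1 t v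
  pV1_sum : ∀ t, ∑ v, pV1 t v = 1
  pV2_nonneg : ∀ t v, 0 ≤ pV2 t v
  pV2_sum : ∀ t, ∑ v, pV2 t v = 1

variable [Fintype (X 0)] [∀ t, Fintype (W t)] [∀ t, Fintype (V1 t)] [∀ t, Fintype (V2 t)]
variable [∀ t, Inhabited (W t)] [∀ t, Inhabited (V1 t)] [∀ t, Inhabited (V2 t)]

/-- Product mass of a sample point (independent primitives). -/
def mass (P : PrimPMF X W V1 V2) (T : ℕ) (ω : ΩT X W V1 V2 T) : ℝ :=
  P.pX0 ω.1 * (∏ t : Fin (T + 1), P.pW t (ω.2.1 t)) *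
    (∏ t : Fin (T + 1), P.pV1 t (ω.2.2.1 t)) * (∏ t : Fin (T + 1), P.pV2 t (ω.2.2.2 t))

/-- Elementary conditional probability `P(A | B)` on a finite sample space. -/
def condProb {Ω : Type*} [Fintype Ω] (P : Ω → ℝ) (A B : Ω → Prop) : ℝ :=
  (∑ ω, if A ω ∧ B ω then P ω else 0) / (∑ ω, if B ω then P ω else 0)

/-- Elementary conditional expectation `E[F | B]` on a finite sample space. -/
def condExp {Ω : Type*} [Fintype Ω] (P : Ω → ℝ) (F : Ω → ℝ) (B : Ω → Prop) : ℝ :=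
  (∑ ω, if B ω then P ω * F ω else 0) / (∑ ω, if B ω then P ω else 0)

/-- Agent 1's information state `Π¹_t = P(X_t = · | M¹_t)` at the realization `ω`. -/
def infoState1 (S : Sys X U1 U2 W V1 V2 Y1 Y2) (g : Strat U1 U2 Y1 Y2)
    (P : PrimPMF X W V1 V2) (T : ℕ) (ω : ΩT X W V1 V2 T) (t : ℕ) : X t → ℝ :=
  fun x => condProb (mass P T)
    (fun ω' => xTraj S g (toPrim T ω') t = x)
    (fun ω' => m1Traj S g (toPrim T ω') t = m1Traj S g (toPrim T ω) t)

/-- Agent 2's information state `Π²_t = P((X_t, L_t^{[1,2]}) = · | M²_t)` at `ω`. -/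
def infoState2 (S : Sys X U1 U2 W V1 V2 Y1 Y2) (g : Strat U1 U2 Y1 Y2)
    (P : PrimPMF X W V1 V2) (T : ℕ) (ω : ΩT X W V1 V2 T) (t : ℕ) :
    X t × Lp Y1 U1 t → ℝ :=
  fun sl => condProb (mass P T)
    (fun ω' => (xTraj S g (toPrim T ω') t, lpTraj S g (toPrim T ω') t) = sl)
    (fun ω' => m2Traj S g (toPrim T ω') t = m2Traj S g (toPrim T ω) t)

/-- Per-stage cost along the closed loop. -/
def stageCost (S : Sys X U1 U2 W V1 V2 Y1 Y2) (g : Strat U1 U2 Y1 Y2) (ρ : Prim X W V1 V2)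
    (t : ℕ) : ℝ := S.c t (xTraj S g ρ t) (u1Traj S g ρ t) (u2Traj S g ρ t)

/-- Expected cost-to-go `𝒥_{t₀}(g) = E[Σ_{t=t₀}^T c_t(X_t,U¹_t,U²_t)]`. -/
def costToGo (S : Sys X U1 U2 W V1 V2 Y1 Y2) (g : Strat U1 U2 Y1 Y2)
    (P : PrimPMF X W V1 V2) (T t0 : ℕ) : ℝ :=
  ∑ ω : ΩT X W V1 V2 T, mass P T ω * ∑ t ∈ Finset.Icc t0 T, stageCost S g (toPrim T ω) t

/-- Expected total cost `𝒥(g) = E[Σ_{t=0}^T c_t(X_t,U¹_t,U²_t)]`. -/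
def totalCost (S : Sys X U1 U2 W V1 V2 Y1 Y2) (g : Strat U1 U2 Y1 Y2)
    (P : PrimPMF X W V1 V2) (T : ℕ) : ℝ := costToGo S g P T 0

/-- `(g, ψ²)` is a compatible control/prescription pair: agent 1's action is
generated by the prescription `Γ_t^{[2,1]} = ψ_t(M²_t)` applied to `Π¹_t`. -/
def Compat (S : Sys X U1 U2 W V1 V2 Y1 Y2) (g : Strat U1 U2 Y1 Y2)
    (ψ : ∀ t, M2 Y2 U2 t → (X t → ℝ) → U1 t) (P : PrimPMF X W V1 V2) (T : ℕ) : Prop :=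
  ∀ t, t ≤ T → ∀ ω : ΩT X W V1 V2 T, 0 < mass P T ω →
    u1Traj S g (toPrim T ω) t =
      ψ t (m2Traj S g (toPrim T ω) t) (infoState1 S g P T ω t)

/-- The map `e_t` of Lemma 4: conditioning a joint distribution on
`𝒳_t × 𝓛_t^{[1,2]}` on its second component. -/
def eMap [∀ t, Fintype (X t)] (t : ℕ) (π2 : X t × Lp Y1 U1 t → ℝ) (l : Lp Y1 U1 t) :
    X t → ℝ := fun x => π2 (x, l) / ∑ x', π2 (x', l)

/-!
Bayes' rule on a finite sample space turns the posterior of `S²_t` given `(M²_t, Z²_{t+1})` into the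
likelihood of `Z²_{t+1}` times the prior `Π²_t`, normalized. For the likelihood, the noise
`(W_t, V¹_{t+1}, V²_{t+1})` is independent of `(S²_t, M²_t)`, since the closed loop up to time `t`
does not involve it. On the event `S²_t = s, M²_t = m` the new information is a fixed function of
this noise, so conditioning on that event leaves the law of the noise unchanged and the likelihood
is a sum over the noise alone.
-/

section FiniteProbability

variable {Ω : Type*} [Fintype Ω] {p : Ω → ℝ} {A A' B : Ω → Prop}

/-- The probability `P(A)` of an event under a weight function on a finite sample space. The
weights need not sum to one: `condProb` only involves ratios of such sums. -/
def prob (p : Ω → ℝ) (A : Ω → Prop) : ℝ := ∑ ω with A ω, p ω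

theorem prob_eq_sum_ite (p : Ω → ℝ) (A : Ω → Prop) [DecidablePred A] :
    prob p A = ∑ ω, if A ω then p ω else 0 := by
  rw [← sum_filter, prob]
  congr!

theorem condProb_eq_div (p : Ω → ℝ) (A B : Ω → Prop) :
    condProb p A B = prob p (fun ω => A ω ∧ B ω) / prob p B := by
  simp only [condProb, prob_eq_sum_ite]

theorem prob_congr (h : ∀ ω, p ω ≠ 0 → (A ω ↔ A' ω)) : prob p A = prob p A' := by
  simp only [prob_eq_sum_ite]
  refine sum_congr rfl fun ω _ => ?_
  by_cases hω : p ω = 0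
  · simp [hω]
  · simp [h ω hω]

theorem condProb_congr (h : ∀ ω, p ω ≠ 0 → B ω → (A ω ↔ A' ω)) :
    condProb p A B = condProb p A' B := by
  rw [condProb_eq_div, condProb_eq_div, prob_congr fun ω hω => and_congr_left (h ω hω)]

theorem prob_mono (hp : ∀ ω, 0 ≤ p ω) (h : ∀ ω, A ω → A' ω) : prob p A ≤ prob p A' :=
  sum_le_sum_of_subset_of_nonneg (monotone_filter_right _ fun ω _ => h ω) fun ω _ _ => hp ω

theorem prob_pos (hp : ∀ ω, 0 ≤ p ω) {ω : Ω} (hω : 0 < p ω) (hA : A ω) : 0 < prob p A :=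
  sum_pos' (fun ω _ => hp ω) ⟨ω, by simpa using hA, hω⟩

theorem prob_eq_zero_of_imp (hp : ∀ ω, 0 ≤ p ω) (h : ∀ ω, A ω → A' ω) (hA' : prob p A' = 0) :
    prob p A = 0 :=
  (hA' ▸ prob_mono hp h).antisymm (sum_nonneg fun ω _ => hp ω)

theorem condProb_and_mul_condProb (hp : ∀ ω, 0 ≤ p ω) (A B Z : Ω → Prop) :
    condProb p Z (fun ω => A ω ∧ B ω) * condProb p A B =
      prob p (fun ω => A ω ∧ B ω ∧ Z ω) / prob p B := by
  have hZ : prob p (fun ω => Z ω ∧ A ω ∧ B ω) = prob p (fun ω => A ω ∧ B ω ∧ Z ω) :=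
    prob_congr fun ω _ => by tauto
  rw [condProb_eq_div, condProb_eq_div, hZ]
  rw [← mul_div_assoc, div_mul_cancel_of_imp]
  exact prob_eq_zero_of_imp hp fun ω h => ⟨h.1, h.2.1⟩

theorem finsum_prob_fiber {σ : Type*} (p : Ω → ℝ) (f : Ω → σ) (B : Ω → Prop) :
    ∑ᶠ s, prob p (fun ω => f ω = s ∧ B ω) = prob p B := by
  simp only [prob_eq_sum_ite]
  rw [finsum_sum_comm univ]
  · refine sum_congr rfl fun ω _ => ?_
    rw [finsum_eq_single _ (f ω) fun s hs => if_neg fun h => hs h.1.symm]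
    simp only [true_and]
  · intro ω _
    refine (Set.finite_singleton (f ω)).subset fun s hs => ?_
    by_contra h
    exact hs (if_neg fun h' => h h'.1.symm)

theorem condProb_eq_mul_div_finsum {σ : Type*} (hp : ∀ ω, 0 ≤ p ω) {B Z : Ω → Prop}
    (hBZ : 0 < prob p fun ω => B ω ∧ Z ω) (f : Ω → σ) (s : σ) :
    condProb p (fun ω => f ω = s) (fun ω => B ω ∧ Z ω) =
      condProb p Z (fun ω => f ω = s ∧ B ω) * condProb p (fun ω => f ω = s) B /
        ∑ᶠ s', condProb p Z (fun ω => f ω = s' ∧ B ω) * condProb p (fun ω => f ω = s') B := by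
  have hB : prob p B ≠ 0 := (hBZ.trans_le (prob_mono hp fun _ => And.left)).ne'
  have total : ∑ᶠ s', condProb p Z (fun ω => f ω = s' ∧ B ω) * condProb p (fun ω => f ω = s') B =
      prob p (fun ω => B ω ∧ Z ω) / prob p B := by
    simp only [condProb_and_mul_condProb hp, div_eq_mul_inv, ← finsum_mul, finsum_prob_fiber]
  rw [total, condProb_and_mul_condProb hp, div_div_div_cancel_right₀ hB, condProb_eq_div]

end FiniteProbability

section Resampling

variable {Ω C : Type*} [Fintype Ω] [Fintype C]

/-- The part `coord : Ω → C` of a sample point is drawn from the probability mass function `q`,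
independently of the rest of the sample point. This is expressed through the operation `resample`
replacing that part, so that `Ω` need not be presented as a product `C × R`. -/
structure IsIndepCoord (p : Ω → ℝ) (q : C → ℝ) (coord : Ω → C) (resample : Ω → C → Ω) : Prop where
  sum_eq_one : ∑ c, q c = 1
  coord_resample : ∀ ω c, coord (resample ω c) = c
  resample_resample_coord : ∀ ω c, resample (resample ω c) (coord ω) = ω
  weight_resample_mul : ∀ ω c, p (resample ω c) * q (coord ω) = p ω * q c

namespace IsIndepCoord

variable {p : Ω → ℝ} {q : C → ℝ} {coord : Ω → C} {resample : Ω → C → Ω}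

theorem sum_mul_comp_coord (h : IsIndepCoord p q coord resample) {E : Ω → ℝ}
    (hE : ∀ ω c, E (resample ω c) = E ω) (F : C → ℝ) :
    ∑ ω, p ω * (E ω * F (coord ω)) = (∑ ω, p ω * E ω) * ∑ c, q c * F c := by
  -- Draw a spare `c` from `q`. Exchanging it with `coord ω` preserves the joint weight `p ω * q c`
  -- and turns `F (coord ω)` into `F c`.
  let exchange : Ω × C → Ω × C := fun x => (resample x.1 x.2, coord x.1)
  have exchange_involutive : Function.Involutive exchange := fun x => by
    simp only [exchange, h.resample_resample_coord, h.coord_resample]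
  calc ∑ ω, p ω * (E ω * F (coord ω))
      = (∑ ω, p ω * (E ω * F (coord ω))) * ∑ c, q c := by rw [h.sum_eq_one, mul_one]
    _ = ∑ x : Ω × C, p x.1 * (E x.1 * F (coord x.1)) * q x.2 := by
        rw [sum_mul_sum, Fintype.sum_prod_type]
    _ = ∑ x : Ω × C, p x.1 * E x.1 * (q x.2 * F x.2) := by
        refine Fintype.sum_equiv exchange_involutive.toPerm _ _ fun ⟨ω, c⟩ => ?_
        simp only [Function.Involutive.coe_toPerm, exchange, hE]
        linear_combination -(E ω * F (coord ω)) * h.weight_resample_mul ω c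
    _ = (∑ ω, p ω * E ω) * ∑ c, q c * F c := by rw [sum_mul_sum, Fintype.sum_prod_type]

theorem prob_coord_and (h : IsIndepCoord p q coord resample) {B : Ω → Prop}
    (hB : ∀ ω c, B (resample ω c) ↔ B ω) (G : C → Prop) :
    prob p (fun ω => G (coord ω) ∧ B ω) = prob q G * prob p B := by
  have key := h.sum_mul_comp_coord (E := fun ω => if B ω then 1 else 0)
    (fun ω c => by simp only [hB]) (fun c => if G c then 1 else 0)
  simp only [mul_ite, mul_one, mul_zero, ← ite_and] at key
  simpa only [prob_eq_sum_ite, mul_comm] using key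

theorem condProb_coord (h : IsIndepCoord p q coord resample) {B : Ω → Prop}
    (hB : ∀ ω c, B (resample ω c) ↔ B ω) (hB₀ : prob p B ≠ 0) (G : C → Prop) :
    condProb p (fun ω => G (coord ω)) B = prob q G := by
  rw [condProb_eq_div, h.prob_coord_and hB, mul_div_cancel_right₀ _ hB₀]

end IsIndepCoord

end Resampling

theorem prod_update_mul {ι : Type*} [Fintype ι] [DecidableEq ι] {α : ι → Type*} {R : Type*}
    [CommMonoid R] (q : ∀ i, α i → R) (a : ∀ i, α i) (i : ι) (x : α i) :
    (∏ j, q j (Function.update a i x j)) * q i (a i) = (∏ j, q j (a j)) * q i x := by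
  simp only [Function.apply_update q, prod_update_of_mem (mem_univ i)]
  rw [← mul_prod_erase univ (fun j => q j (a j)) (mem_univ i), sdiff_singleton_eq_erase]
  ac_rfl

section Trajectories

variable {X U1 U2 W V1 V2 Y1 Y2 : ℕ → Type}

/-- The new state `S²_t = (X_t, L_t^{[1,2]})` of agent 2 along the closed loop. -/
def s2Traj (S : Sys X U1 U2 W V1 V2 Y1 Y2) (g : Strat U1 U2 Y1 Y2) (ρ : Prim X W V1 V2) (t : ℕ) :
    X t × Lp Y1 U1 t := (xTraj S g ρ t, lpTraj S g ρ t)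

variable (S : Sys X U1 U2 W V1 V2 Y1 Y2) (g : Strat U1 U2 Y1 Y2) {ρ ρ' : Prim X W V1 V2} {t : ℕ}

theorem hist_congr (h0 : ρ.x0 = ρ'.x0) (hw : ∀ s < t, ρ.w s = ρ'.w s)
    (hv1 : ∀ s < t, ρ.v1 s = ρ'.v1 s) (hv2 : ∀ s < t, ρ.v2 s = ρ'.v2 s) :
    hist S g ρ t = hist S g ρ' t := by
  induction t with
  | zero => simp only [hist, h0]
  | succ t ih =>
    have past := ih (fun s hs => hw s (by omega)) (fun s hs => hv1 s (by omega))
      (fun s hs => hv2 s (by omega))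
    have noise1 (s : Fin (t + 1)) : ρ.v1 s = ρ'.v1 s := hv1 s s.2
    have noise2 (s : Fin (t + 1)) : ρ.v2 s = ρ'.v2 s := hv2 s s.2
    simp only [hist, past, noise1, noise2, hw t (by omega)]

theorem s2Traj_congr (h0 : ρ.x0 = ρ'.x0) (hw : ∀ s < t, ρ.w s = ρ'.w s)
    (hv1 : ∀ s ≤ t, ρ.v1 s = ρ'.v1 s) (hv2 : ∀ s < t, ρ.v2 s = ρ'.v2 s) :
    s2Traj S g ρ t = s2Traj S g ρ' t := by
  have past := hist_congr S g h0 hw (fun s hs => hv1 s hs.le) hv2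
  have noise (s : Fin (t + 1)) : ρ.v1 s = ρ'.v1 s := hv1 s (Nat.lt_succ_iff.1 s.2)
  simp only [s2Traj, xTraj, lpTraj, past, noise]

theorem m2Traj_congr (h0 : ρ.x0 = ρ'.x0) (hw : ∀ s < t, ρ.w s = ρ'.w s)
    (hv1 : ∀ s < t, ρ.v1 s = ρ'.v1 s) (hv2 : ∀ s ≤ t, ρ.v2 s = ρ'.v2 s) :
    m2Traj S g ρ t = m2Traj S g ρ' t := by
  have past := hist_congr S g h0 hw hv1 (fun s hs => hv2 s hs.le)
  have noise (s : Fin (t + 1)) : ρ.v2 s = ρ'.v2 s := hv2 s (Nat.lt_succ_iff.1 s.2)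
  simp only [m2Traj, past, noise]

end Trajectories

section Noise

variable {X U1 U2 W V1 V2 Y1 Y2 : ℕ → Type} {T t : ℕ}

/-- The noise `(W_t, V¹_{t+1}, V²_{t+1})` entering between the times `t` and `t + 1`. -/
def noise (ht : t < T) (ω : ΩT X W V1 V2 T) : W t × V1 (t + 1) × V2 (t + 1) :=
  (ω.2.1 ⟨t, by omega⟩, ω.2.2.1 ⟨t + 1, by omega⟩, ω.2.2.2 ⟨t + 1, by omega⟩)

/-- The sample point obtained from `ω` by replacing the noise `(W_t, V¹_{t+1}, V²_{t+1})`. -/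
def resampleNoise (ht : t < T) (ω : ΩT X W V1 V2 T) (c : W t × V1 (t + 1) × V2 (t + 1)) :
    ΩT X W V1 V2 T :=
  (ω.1, Function.update ω.2.1 ⟨t, by omega⟩ c.1,
    Function.update ω.2.2.1 ⟨t + 1, by omega⟩ c.2.1,
    Function.update ω.2.2.2 ⟨t + 1, by omega⟩ c.2.2)

section Weights

variable [Fintype (X 0)] [∀ t, Fintype (W t)] [∀ t, Fintype (V1 t)] [∀ t, Fintype (V2 t)]

/-- The probability mass function of the noise `(W_t, V¹_{t+1}, V²_{t+1})`. -/
def noiseMass (P : PrimPMF X W V1 V2) (t : ℕ) (c : W t × V1 (t + 1) × V2 (t + 1)) : ℝ :=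
  P.pW t c.1 * P.pV1 (t + 1) c.2.1 * P.pV2 (t + 1) c.2.2

theorem mass_nonneg (P : PrimPMF X W V1 V2) (ω : ΩT X W V1 V2 T) : 0 ≤ mass P T ω :=
  mul_nonneg (mul_nonneg (mul_nonneg (P.pX0_nonneg _) (prod_nonneg fun _ _ => P.pW_nonneg _ _))
    (prod_nonneg fun _ _ => P.pV1_nonneg _ _)) (prod_nonneg fun _ _ => P.pV2_nonneg _ _)

theorem sum_noiseMass (P : PrimPMF X W V1 V2) (t : ℕ) : ∑ c, noiseMass P t c = 1 := by
  simp only [noiseMass, Fintype.sum_prod_type, ← mul_sum, P.pV2_sum, P.pV1_sum, P.pW_sum, mul_one]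

theorem mass_resampleNoise_mul (P : PrimPMF X W V1 V2) (ht : t < T) (ω : ΩT X W V1 V2 T)
    (c : W t × V1 (t + 1) × V2 (t + 1)) :
    mass P T (resampleNoise ht ω c) * noiseMass P t (noise ht ω) =
      mass P T ω * noiseMass P t c := by
  have hw := prod_update_mul (fun i : Fin (T + 1) => P.pW i) ω.2.1 ⟨t, by omega⟩ c.1
  have hv1 := prod_update_mul (fun i : Fin (T + 1) => P.pV1 i) ω.2.2.1 ⟨t + 1, by omega⟩ c.2.1
  have hv2 := prod_update_mul (fun i : Fin (T + 1) => P.pV2 i) ω.2.2.2 ⟨t + 1, by omega⟩ c.2.2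
  simp only [mass, noiseMass, resampleNoise, noise] at hw hv1 hv2 ⊢
  linear_combination P.pX0 ω.1 * congr($hw * $hv1 * $hv2)

theorem isIndepCoord_noise (P : PrimPMF X W V1 V2) (ht : t < T) :
    IsIndepCoord (mass P T) (noiseMass P t) (noise ht) (resampleNoise ht) where
  sum_eq_one := sum_noiseMass P t
  coord_resample ω c := by simp only [noise, resampleNoise, Function.update_self]
  resample_resample_coord ω c := by
    simp only [noise, resampleNoise, Function.update_idem, Function.update_eq_self]
  weight_resample_mul := mass_resampleNoise_mul P ht

theorem prob_noiseMass (P : PrimPMF X W V1 V2) (t : ℕ)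
    (G : W t × V1 (t + 1) × V2 (t + 1) → Prop) [DecidablePred G] :
    prob (noiseMass P t) G = ∑ w : W t, ∑ v1 : V1 (t + 1), ∑ v2 : V2 (t + 1),
      if G (w, v1, v2) then P.pW t w * P.pV1 (t + 1) v1 * P.pV2 (t + 1) v2 else 0 := by
  simp only [prob_eq_sum_ite, Fintype.sum_prod_type, noiseMass]

end Weights

theorem ext_of_lt {α : ℕ → Type} [∀ t, Inhabited (α t)] (a : (t : Fin (T + 1)) → α t)
    (ht : t < T + 1) : ext T a t = a ⟨t, ht⟩ :=
  dif_pos ht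

theorem ext_update_of_ne {α : ℕ → Type} [∀ t, Inhabited (α t)] (a : (t : Fin (T + 1)) → α t)
    {i : Fin (T + 1)} (x : α i) {s : ℕ} (hs : s ≠ i) :
    ext T (Function.update a i x) s = ext T a s := by
  unfold ext
  split_ifs with h
  · exact Function.update_of_ne (fun hi => hs (congrArg Fin.val hi)) _ _
  · rfl

variable [∀ t, Inhabited (W t)] [∀ t, Inhabited (V1 t)] [∀ t, Inhabited (V2 t)]

theorem noise_eq_toPrim (ht : t < T) (ω : ΩT X W V1 V2 T) :
    noise ht ω = ((toPrim T ω).w t, (toPrim T ω).v1 (t + 1), (toPrim T ω).v2 (t + 1)) := by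
  simp only [noise, toPrim, ext_of_lt _ (Nat.lt_succ_of_lt ht), ext_of_lt _ (Nat.succ_lt_succ ht)]

variable (S : Sys X U1 U2 W V1 V2 Y1 Y2) (g : Strat U1 U2 Y1 Y2)

theorem s2Traj_resampleNoise (ht : t < T) (ω : ΩT X W V1 V2 T)
    (c : W t × V1 (t + 1) × V2 (t + 1)) :
    s2Traj S g (toPrim T (resampleNoise ht ω c)) t = s2Traj S g (toPrim T ω) t :=
  s2Traj_congr S g rfl (fun _ hs => ext_update_of_ne _ _ hs.ne)
    (fun _ hs => ext_update_of_ne _ _ (Nat.lt_succ_of_le hs).ne)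
    (fun _ hs => ext_update_of_ne _ _ (Nat.lt_succ_of_lt hs).ne)

theorem m2Traj_resampleNoise (ht : t < T) (ω : ΩT X W V1 V2 T)
    (c : W t × V1 (t + 1) × V2 (t + 1)) :
    m2Traj S g (toPrim T (resampleNoise ht ω c)) t = m2Traj S g (toPrim T ω) t :=
  m2Traj_congr S g rfl (fun _ hs => ext_update_of_ne _ _ hs.ne)
    (fun _ hs => ext_update_of_ne _ _ (Nat.lt_succ_of_lt hs).ne)
    (fun _ hs => ext_update_of_ne _ _ (Nat.lt_succ_of_le hs).ne)

end Noise

/-- Agent 2's information state as a function of the value `m` of its memory `M²_t`. -/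
def infoState2Of (S : Sys X U1 U2 W V1 V2 Y1 Y2) (g : Strat U1 U2 Y1 Y2)
    (P : PrimPMF X W V1 V2) (T t : ℕ) (m : M2 Y2 U2 t) : X t × Lp Y1 U1 t → ℝ :=
  fun s => condProb (mass P T) (fun ω => s2Traj S g (toPrim T ω) t = s)
    (fun ω => m2Traj S g (toPrim T ω) t = m)

theorem condProb_z2Traj_eq_sum (S : Sys X U1 U2 W V1 V2 Y1 Y2) (g : Strat U1 U2 Y1 Y2)
    (P : PrimPMF X W V1 V2) {T t : ℕ} (ht : t < T) {s : X t × Lp Y1 U1 t} {m : M2 Y2 U2 t}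
    {φ : W t → V1 (t + 1) → V2 (t + 1) → Y2 (t + 1) × U2 t}
    (hφ : ∀ ω : ΩT X W V1 V2 T, 0 < mass P T ω →
      s2Traj S g (toPrim T ω) t = s → m2Traj S g (toPrim T ω) t = m →
      z2Traj S g (toPrim T ω) t =
        φ ((toPrim T ω).w t) ((toPrim T ω).v1 (t + 1)) ((toPrim T ω).v2 (t + 1)))
    (hsm : 0 < prob (mass P T) fun ω =>
      s2Traj S g (toPrim T ω) t = s ∧ m2Traj S g (toPrim T ω) t = m)
    (z : Y2 (t + 1) × U2 t) :
    condProb (mass P T) (fun ω => z2Traj S g (toPrim T ω) t = z)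
        (fun ω => s2Traj S g (toPrim T ω) t = s ∧ m2Traj S g (toPrim T ω) t = m) =
      ∑ w : W t, ∑ v1 : V1 (t + 1), ∑ v2 : V2 (t + 1),
        if φ w v1 v2 = z then P.pW t w * P.pV1 (t + 1) v1 * P.pV2 (t + 1) v2 else 0 := by
  calc condProb (mass P T) (fun ω => z2Traj S g (toPrim T ω) t = z)
        (fun ω => s2Traj S g (toPrim T ω) t = s ∧ m2Traj S g (toPrim T ω) t = m)
      = condProb (mass P T)
          (fun ω => φ (noise ht ω).1 (noise ht ω).2.1 (noise ht ω).2.2 = z)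
          (fun ω => s2Traj S g (toPrim T ω) t = s ∧ m2Traj S g (toPrim T ω) t = m) :=
        condProb_congr fun ω hω ⟨hs, hm⟩ => by
          rw [hφ ω ((mass_nonneg P ω).lt_of_ne' hω) hs hm, noise_eq_toPrim]
    _ = prob (noiseMass P t) fun c => φ c.1 c.2.1 c.2.2 = z :=
        (isIndepCoord_noise P ht).condProb_coord
          (fun ω c => by rw [s2Traj_resampleNoise, m2Traj_resampleNoise]) hsm.ne'
          (fun c => φ c.1 c.2.1 c.2.2 = z)
    _ = _ := prob_noiseMass P t _

/-- The paper's `φ̂_t(s, π, γ, u, w, v¹, v²)` enters as `φ s m w v¹ v²`: the information state `π`,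
the prescription `γ` and the action `u` are all functions of the memory `m`. -/
theorem bayes_filter_formula_general
    (S : Sys X U1 U2 W V1 V2 Y1 Y2) (g : Strat U1 U2 Y1 Y2) (P : PrimPMF X W V1 V2)
    {T t : ℕ} (ht : t < T)
    (φ : X t × Lp Y1 U1 t → M2 Y2 U2 t → W t → V1 (t + 1) → V2 (t + 1) → Y2 (t + 1) × U2 t)
    (hφ : ∀ ω : ΩT X W V1 V2 T, 0 < mass P T ω →
      z2Traj S g (toPrim T ω) t = φ (s2Traj S g (toPrim T ω) t) (m2Traj S g (toPrim T ω) t)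
        ((toPrim T ω).w t) ((toPrim T ω).v1 (t + 1)) ((toPrim T ω).v2 (t + 1)))
    (s : X t × Lp Y1 U1 t) (m : M2 Y2 U2 t) (z : Y2 (t + 1) × U2 t) :
    (0 < prob (mass P T)
        (fun ω => m2Traj S g (toPrim T ω) t = m ∧ z2Traj S g (toPrim T ω) t = z) →
      condProb (mass P T) (fun ω => s2Traj S g (toPrim T ω) t = s)
          (fun ω => m2Traj S g (toPrim T ω) t = m ∧ z2Traj S g (toPrim T ω) t = z) =
        condProb (mass P T) (fun ω => z2Traj S g (toPrim T ω) t = z)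
            (fun ω => s2Traj S g (toPrim T ω) t = s ∧ m2Traj S g (toPrim T ω) t = m) *
          infoState2Of S g P T t m s /
        ∑ᶠ s' : X t × Lp Y1 U1 t,
          condProb (mass P T) (fun ω => z2Traj S g (toPrim T ω) t = z)
              (fun ω => s2Traj S g (toPrim T ω) t = s' ∧ m2Traj S g (toPrim T ω) t = m) *
            infoState2Of S g P T t m s') ∧
    (0 < prob (mass P T)
        (fun ω => s2Traj S g (toPrim T ω) t = s ∧ m2Traj S g (toPrim T ω) t = m) →
      condProb (mass P T) (fun ω => z2Traj S g (toPrim T ω) t = z)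
          (fun ω => s2Traj S g (toPrim T ω) t = s ∧ m2Traj S g (toPrim T ω) t = m) =
        ∑ w : W t, ∑ v1 : V1 (t + 1), ∑ v2 : V2 (t + 1),
          if φ s m w v1 v2 = z then
            P.pW t w * P.pV1 (t + 1) v1 * P.pV2 (t + 1) v2 else 0) := by
  refine ⟨fun hmz => condProb_eq_mul_div_finsum (mass_nonneg P) hmz _ s, fun hsm => ?_⟩
  refine condProb_z2Traj_eq_sum S g P ht (fun ω hω hs hm => ?_) hsm z
  rw [hφ ω hω, hs, hm]

/-- Appendix B, equations (34) and (37) of the paper. Along every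
realization of positive probability, the conditional distribution of agent 2's new
state `S²_t = (X_t, L_t^{[1,2]})` given `(π²_t, m²_t, z²_{t+1}, γ_{0:t}^{[2,1]})`
satisfies the Bayes-filter formula, and the observation likelihood
`P(Z²_{t+1} = z²_{t+1} | s²_t, π²_t, m²_t, γ_{0:t}^{[2,1]})` is strategy-independent:
it equals `Σ_{w,v¹,v²} 𝕀[φ̂_t(s²_t, π²_t, γ_t^{[2,1]}, u²_t, w, v¹, v²) = z²_{t+1}]
· P(W_t = w) · P(V¹_{t+1} = v¹) · P(V²_{t+1} = v²)`. -/
theorem bayes_filter_formula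
    [∀ t, Fintype (X t)] [∀ t, Fintype (U1 t)] [∀ t, Fintype (U2 t)]
    [∀ t, Fintype (Y1 t)] [∀ t, Fintype (Y2 t)]
    (T : ℕ) (S : Sys X U1 U2 W V1 V2 Y1 Y2) (P : PrimPMF X W V1 V2)
    (g : Strat U1 U2 Y1 Y2) (ψ : ∀ t, M2 Y2 U2 t → (X t → ℝ) → U1 t)
    (hcompat : Compat S g ψ P T)
    (φhat : ∀ t, (X t × Lp Y1 U1 t) → (X t × Lp Y1 U1 t → ℝ) → ((X t → ℝ) → U1 t) →
      U2 t → W t → V1 (t + 1) → V2 (t + 1) → Y2 (t + 1) × U2 t)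
    (hφhat : ∀ t, t < T → ∀ ω : ΩT X W V1 V2 T, 0 < mass P T ω →
      z2Traj S g (toPrim T ω) t =
        φhat t (xTraj S g (toPrim T ω) t, lpTraj S g (toPrim T ω) t)
          (infoState2 S g P T ω t) (ψ t (m2Traj S g (toPrim T ω) t))
          (u2Traj S g (toPrim T ω) t) ((toPrim T ω).w t)
          ((toPrim T ω).v1 (t + 1)) ((toPrim T ω).v2 (t + 1))) :
    ∀ t, t < T → ∀ ω : ΩT X W V1 V2 T, 0 < mass P T ω →
      ∀ s : X t × Lp Y1 U1 t,
        0 < (∑ ω' : ΩT X W V1 V2 T,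
            if (xTraj S g (toPrim T ω') t, lpTraj S g (toPrim T ω') t) = s ∧
                m2Traj S g (toPrim T ω') t = m2Traj S g (toPrim T ω) t then
              mass P T ω' else 0) →
        -- the Bayes-filter formula
        (condProb (mass P T)
            (fun ω' => (xTraj S g (toPrim T ω') t, lpTraj S g (toPrim T ω') t) = s)
            (fun ω' => m2Traj S g (toPrim T ω') t = m2Traj S g (toPrim T ω) t ∧
              z2Traj S g (toPrim T ω') t = z2Traj S g (toPrim T ω) t) =
          (condProb (mass P T)
              (fun ω' => z2Traj S g (toPrim T ω') t = z2Traj S g (toPrim T ω) t)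
              (fun ω' => (xTraj S g (toPrim T ω') t, lpTraj S g (toPrim T ω') t) = s ∧
                m2Traj S g (toPrim T ω') t = m2Traj S g (toPrim T ω) t) *
            infoState2 S g P T ω t s) /
          ∑ st : X t × Lp Y1 U1 t,
            condProb (mass P T)
                (fun ω' => z2Traj S g (toPrim T ω') t = z2Traj S g (toPrim T ω) t)
                (fun ω' => (xTraj S g (toPrim T ω') t, lpTraj S g (toPrim T ω') t) = st ∧
                  m2Traj S g (toPrim T ω') t = m2Traj S g (toPrim T ω) t) *
              infoState2 S g P T ω t st) ∧
        -- strategy-independence of the observation likelihood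
        (condProb (mass P T)
            (fun ω' => z2Traj S g (toPrim T ω') t = z2Traj S g (toPrim T ω) t)
            (fun ω' => (xTraj S g (toPrim T ω') t, lpTraj S g (toPrim T ω') t) = s ∧
              m2Traj S g (toPrim T ω') t = m2Traj S g (toPrim T ω) t) =
          ∑ w : W t, ∑ v1 : V1 (t + 1), ∑ v2 : V2 (t + 1),
            if φhat t s (infoState2 S g P T ω t) (ψ t (m2Traj S g (toPrim T ω) t))
                (u2Traj S g (toPrim T ω) t) w v1 v2 = z2Traj S g (toPrim T ω) t then
              P.pW t w * P.pV1 (t + 1) v1 * P.pV2 (t + 1) v2 else 0) := by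
  intro t ht ω hω s hs
  obtain ⟨bayes, likelihood⟩ := bayes_filter_formula_general S g P ht
    (fun s m => φhat t s (infoState2Of S g P T t m) (ψ t m) (g.g2 t m)) (hφhat t ht)
    s (m2Traj S g (toPrim T ω) t) (z2Traj S g (toPrim T ω) t)
  rw [finsum_eq_sum_of_fintype] at bayes
  exact ⟨bayes (prob_pos (mass_nonneg P) hω ⟨rfl, rfl⟩),
    likelihood (hs.trans_eq (prob_eq_sum_ite _ _).symm)⟩

end

end NestedTeam
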